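/- Let f : ℝ → ℝ be twice continuously differentiable, let x* be a simple root of f (i.e. f(x*) = 0 and f'(x*) ≠ 0) with f''(x*) ≠ 0, and let g : ℝ → ℝ be continuously differentiable with g(0) = 0, g'(0) ≠ 0, and 1 + g'(0)·f'(x*) ≠ 0. Let v be the modified Steffensen iteration map v(x) = x − f(x)/h(x) with h(x) = (f(x + g(f(x))) − f(x)) / g(f(x)). Then the convergence is of exact order two: for every initial point x₀ ≠ x* sufficiently close to x*, the iterates x_{n+1} = v(x_n) satisfy x_n ≠ x* for all n and |x_{n+1} − x*| / |x_n − x*|² converges to the positive constant |f''(x*)·(1 + g'(0)·f'(x*))| / |2·f'(x*)|. -/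

import Mathlib

open Filter Topology

/-!
Write `y = x + g (f x)` and use divided differences. Since `f[x*, x] (x - x*) = f x`, the Leibniz
rule gives the exact error formula `v x - x* = (x - x*) (y - x*) f[x*, x, y] / f[x, y]`. When
`x → x*`, the quotient `(y - x*) / (x - x*)` tends to `1 + g'(0) f'(x*)`. Moreover
`x - x* = O(y - x)` because `g'(0) f'(x*) ≠ 0`, and this is what lets the divided differences with
two moving nodes converge without any continuity of `f''`: `f[x, y] → f'(x*)` and
`f[x*, x, y] → f''(x*) / 2`. Hence `(v x - x*) / (x - x*)²` has a nonzero limit, so `v` contracts a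
punctured neighbourhood of `x*` into itself and the limit can be read along any orbit.
-/

section DividedDifferences

variable {𝕜 E : Type*} [NontriviallyNormedField 𝕜] [NormedAddCommGroup E] [NormedSpace 𝕜 E]

theorem slope_eq_dslope_add_smul_slope_dslope (f : 𝕜 → E) (r : 𝕜) {x y : 𝕜} (hxy : x ≠ y) :
    slope f x y = dslope f r x + (y - r) • slope (dslope f r) x y := by
  have hyx : y - x ≠ 0 := sub_ne_zero.2 hxy.symm
  apply smul_right_injective E hyx
  simp only [smul_add, smul_comm (y - x) (y - r), sub_smul_slope, vsub_eq_sub, smul_sub,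
    sub_smul_dslope]
  rw [← sub_sub_sub_cancel_right (f y) (f x) (f r), ← sub_smul_dslope f r x]
  module

theorem tendsto_slope_of_isBigO_sub {ι : Type*} {l : Filter ι} {F : 𝕜 → E} {F' : E}
    {r : 𝕜} {u v : ι → 𝕜} (hF : HasDerivAt F F' r) (hu : Tendsto u l (𝓝 r))
    (hv : Tendsto v l (𝓝 r)) (huv : (fun i => u i - r) =O[l] fun i => v i - u i)
    (hne : ∀ᶠ i in l, u i ≠ v i) :
    Tendsto (fun i => slope F (u i) (v i)) l (𝓝 F') := by
  have hvu : (fun i => v i - r) =O[l] fun i => v i - u i := by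
    simpa using (Asymptotics.isBigO_refl (fun i => v i - u i) l).add huv
  have remainder : (fun i => (F (v i) - F r - (v i - r) • F') - (F (u i) - F r - (u i - r) • F'))
      =o[l] fun i => v i - u i :=
    ((hF.isLittleO.comp_tendsto hv).trans_isBigO hvu).sub
      ((hF.isLittleO.comp_tendsto hu).trans_isBigO huv)
  rw [← tendsto_sub_nhds_zero_iff]
  refine remainder.tendsto_inv_smul_nhds_zero.congr' ?_
  filter_upwards [hne] with i hi
  have hvui : v i - u i ≠ 0 := sub_ne_zero.2 hi.symm
  rw [slope_def_module]
  match_scalars <;> field_simp <;> ring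

theorem tendsto_slope_self_add {F : 𝕜 → E} {F' : E} {k : 𝕜 → 𝕜} {k' r : 𝕜}
    (hF : HasDerivAt F F' r) (hk : HasDerivAt k k' r) (hkr : k r = 0) (hk' : k' ≠ 0) :
    Tendsto (fun x => slope F x (x + k x)) (𝓝[≠] r) (𝓝 F') := by
  have id_tendsto : Tendsto (fun x : 𝕜 => x) (𝓝[≠] r) (𝓝 r) := nhdsWithin_le_nhds
  have k_tendsto : Tendsto k (𝓝[≠] r) (𝓝 0) := hkr ▸ hk.continuousAt.continuousWithinAt
  refine tendsto_slope_of_isBigO_sub hF id_tendsto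
    (by simpa using id_tendsto.add k_tendsto) ?_ ?_
  · have sub_isBigO : (fun x => x - r) =O[𝓝 r] fun x => k x - k r := by
      simpa [Function.comp_def] using (HasDerivAtFilter.isTheta_sub hk hk').isBigO_symm
    simpa [hkr] using sub_isBigO.mono nhdsWithin_le_nhds
  · filter_upwards [hk.eventually_ne (c := 0) hk'] with x hx
    simpa using hx

end DividedDifferences

theorem hasDerivAt_dslope_of_hasDerivAt_deriv {E : Type*} [NormedAddCommGroup E]
    [NormedSpace ℝ E] {f : ℝ → E} {f'' : E} {r : ℝ}
    (hf : ∀ᶠ x in 𝓝 r, DifferentiableAt ℝ f x) (hf' : HasDerivAt (deriv f) f'' r) :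
    HasDerivAt (dslope f r) ((1 / 2 : ℝ) • f'') r := by
  obtain ⟨ε, hε, hball⟩ := Metric.eventually_nhds_iff_ball.1 hf
  let R : ℝ → E := fun x => f x - (x - r) • deriv f r - ((x - r) ^ 2 / 2) • f''
  have hR : ∀ x ∈ Metric.ball r ε,
      HasDerivWithinAt R (deriv f x - deriv f r - (x - r) • f'') (Metric.ball r ε) x := by
    intro x hx
    have hid : HasDerivAt (fun x => x - r) 1 x := (hasDerivAt_id x).sub_const r
    have hsq : HasDerivAt (fun x => (x - r) ^ 2 / 2) (x - r) x :=
      ((hid.pow 2).div_const 2).congr_deriv (by simp)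
    exact ((((hball x hx).hasDerivAt.sub (hid.smul_const _)).sub
      (hsq.smul_const _)).congr_deriv (by simp)).hasDerivWithinAt
  have taylor : (fun x => R x - R r) =o[𝓝 r] fun x => (x - r) ^ 2 := by
    rw [← Metric.isOpen_ball.nhdsWithin_eq (Metric.mem_ball_self hε)]
    refine (convex_ball r ε).isLittleO_pow_succ_real (n := 1) (Metric.mem_ball_self hε) hR ?_
    simpa using hf'.isLittleO.mono nhdsWithin_le_nhds
  rw [hasDerivAt_iff_tendsto_slope, ← tendsto_sub_nhds_zero_iff]
  refine (taylor.mono nhdsWithin_le_nhds).tendsto_inv_smul_nhds_zero.congr' ?_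
  filter_upwards [self_mem_nhdsWithin] with x hx
  have hxr : x - r ≠ 0 := sub_ne_zero.2 hx
  rw [slope_def_module, dslope_same, dslope_of_ne f hx, slope_def_module]
  simp only [R]
  match_scalars <;> field_simp <;> simp

section LocalDynamics

variable {X : Type*} [PseudoMetricSpace X] {v : X → X} {p : X}

theorem eventually_iterate_ne_and_tendsto_iterate {K : ℝ} (hK0 : 0 ≤ K) (hK : K < 1)
    (hv : ∀ᶠ x in 𝓝[≠] p, v x ≠ p ∧ dist (v x) p ≤ K * dist x p) :
    ∀ᶠ x in 𝓝[≠] p, (∀ n, v^[n] x ≠ p) ∧ Tendsto (fun n => v^[n] x) atTop (𝓝[≠] p) := by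
  obtain ⟨δ, hδ, hball⟩ := Metric.nhdsWithin_basis_ball.eventually_iff.1 hv
  refine Metric.nhdsWithin_basis_ball.eventually_iff.2 ⟨δ, hδ, fun x ⟨hxδ, hxp⟩ => ?_⟩
  have orbit : ∀ n, v^[n] x ≠ p ∧ dist (v^[n] x) p ≤ K ^ n * dist x p := by
    intro n
    induction n with
    | zero => simpa using hxp
    | succ n ih =>
      obtain ⟨hne, hle⟩ := ih
      have hlt : dist (v^[n] x) p < δ := hle.trans_lt <|
        (mul_le_of_le_one_left dist_nonneg (pow_le_one₀ hK0 hK.le)).trans_lt hxδ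
      obtain ⟨hne', hle'⟩ := hball ⟨hlt, hne⟩
      rw [Function.iterate_succ_apply']
      refine ⟨hne', hle'.trans ?_⟩
      rw [pow_succ', mul_assoc]
      gcongr
  have dist_tendsto : Tendsto (fun n => K ^ n * dist x p) atTop (𝓝 0) := by
    simpa using (tendsto_pow_atTop_nhds_zero_of_lt_one hK0 hK).mul_const (dist x p)
  refine ⟨fun n => (orbit n).1, tendsto_nhdsWithin_iff.2 ⟨?_, .of_forall fun n => (orbit n).1⟩⟩
  exact tendsto_iff_dist_tendsto_zero.2 <|
    squeeze_zero (fun _ => dist_nonneg) (fun n => (orbit n).2) dist_tendsto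

theorem eventually_ne_and_dist_le_of_tendsto_dist_div_pow {k : ℕ} {C K : ℝ} (hk : 1 < k)
    (hC : 0 < C) (hK : 0 < K)
    (hv : Tendsto (fun x => dist (v x) p / dist x p ^ k) (𝓝[≠] p) (𝓝 C)) :
    ∀ᶠ x in 𝓝[≠] p, v x ≠ p ∧ dist (v x) p ≤ K * dist x p := by
  have dist_pow_tendsto : Tendsto (fun x => dist x p ^ (k - 1)) (𝓝[≠] p) (𝓝 0) := by
    have h : Tendsto (fun x => dist x p) (𝓝[≠] p) (𝓝 0) :=
      tendsto_iff_dist_tendsto_zero.1 (tendsto_id'.2 nhdsWithin_le_nhds)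
    simpa [(Nat.sub_pos_of_lt hk).ne'] using h.pow (k - 1)
  have ratio_tendsto : Tendsto (fun x => dist (v x) p / dist x p ^ k * dist x p ^ (k - 1))
      (𝓝[≠] p) (𝓝 0) := by
    simpa using hv.mul dist_pow_tendsto
  filter_upwards [hv.eventually_const_lt hC, ratio_tendsto.eventually_lt_const hK]
    with x hpos hlt
  have hxp : dist x p ≠ 0 := fun h => by simp [h, (zero_lt_one.trans hk).ne'] at hpos
  refine ⟨fun h => by simp [h] at hpos, ?_⟩
  calc dist (v x) p = dist (v x) p / dist x p ^ k * dist x p ^ (k - 1) * dist x p := by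
        rw [mul_assoc, pow_sub_one_mul (by lia), div_mul_cancel₀ _ (by positivity)]
    _ ≤ K * dist x p := by gcongr

theorem eventually_iterate_ne_and_tendsto_dist_div_pow {k : ℕ} {C : ℝ} (hk : 1 < k) (hC : 0 < C)
    (hv : Tendsto (fun x => dist (v x) p / dist x p ^ k) (𝓝[≠] p) (𝓝 C)) :
    ∀ᶠ x in 𝓝[≠] p, (∀ n, v^[n] x ≠ p) ∧
      Tendsto (fun n => dist (v^[n + 1] x) p / dist (v^[n] x) p ^ k) atTop (𝓝 C) := by
  filter_upwards [eventually_iterate_ne_and_tendsto_iterate one_half_pos.le one_half_lt_one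
    (eventually_ne_and_dist_le_of_tendsto_dist_div_pow hk hC one_half_pos hv)]
    with x ⟨hne, htendsto⟩
  simp only [Function.iterate_succ_apply']
  exact ⟨hne, hv.comp htendsto⟩

end LocalDynamics

section Steffensen

/-- One step of the modified Steffensen iteration for `f` with auxiliary function `g`: Newton's
step with `f' x` replaced by the divided difference of `f` between `x` and `x + g (f x)`. Where that
divided difference is undefined or zero, division by zero makes `x` a fixed point. -/
def steffensenMap {K : Type*} [Field K] (f g : K → K) (x : K) : K :=
  x - f x / ((f (x + g (f x)) - f x) / g (f x))

variable {𝕜 : Type*} [NontriviallyNormedField 𝕜] {f g : 𝕜 → 𝕜} {r : 𝕜}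

theorem steffensenMap_eq_sub_div_slope {K : Type*} [Field K] (f g : K → K) (x : K) :
    steffensenMap f g x = x - f x / slope f x (x + g (f x)) := by
  rw [steffensenMap, slope_def_field, add_sub_cancel_left]

theorem steffensenMap_sub_root {x : 𝕜} (hroot : f r = 0) (hx : slope f x (x + g (f x)) ≠ 0) :
    steffensenMap f g x - r =
      (x - r) * (x + g (f x) - r) * slope (dslope f r) x (x + g (f x)) /
        slope f x (x + g (f x)) := by
  have hne : x ≠ x + g (f x) := fun h => hx (by rw [← h, slope_same])
  have hslope := slope_eq_dslope_add_smul_slope_dslope f r hne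
  have hfx : (x - r) * dslope f r x = f x := sub_smul_dslope_of_zero hroot x
  rw [smul_eq_mul] at hslope
  rw [steffensenMap_eq_sub_div_slope, eq_div_iff hx, sub_right_comm, sub_mul, div_mul_cancel₀ _ hx]
  linear_combination (x - r) * hslope + hfx

theorem tendsto_steffensenMap_sub_root_div_sq {b c : 𝕜} (hroot : f r = 0) (hf' : deriv f r ≠ 0)
    (hf : HasDerivAt (dslope f r) b r) (hg0 : g 0 = 0) (hg : HasDerivAt g c 0) (hc : c ≠ 0) :
    Tendsto (fun x => (steffensenMap f g x - r) / (x - r) ^ 2) (𝓝[≠] r)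
      (𝓝 (b * (1 + c * deriv f r) / deriv f r)) := by
  have hfr : HasDerivAt f (deriv f r) r :=
    (continuousAt_dslope_same.1 hf.continuousAt).hasDerivAt
  have hgf : HasDerivAt (fun x => g (f x)) (c * deriv f r) r :=
    HasDerivAt.comp r (by rwa [hroot]) hfr
  have hgf0 : g (f r) = 0 := by rw [hroot, hg0]
  have hgf' : c * deriv f r ≠ 0 := mul_ne_zero hc hf'
  have step_tendsto : Tendsto (fun x => 1 + g (f x) / (x - r)) (𝓝[≠] r)
      (𝓝 (1 + c * deriv f r)) := by
    simpa [slope_fun_def_field, hgf0] using (hasDerivAt_iff_tendsto_slope.1 hgf).const_add 1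
  have slope_tendsto := tendsto_slope_self_add hfr hgf hgf0 hgf'
  have second_slope_tendsto := tendsto_slope_self_add hf hgf hgf0 hgf'
  refine ((second_slope_tendsto.mul step_tendsto).div slope_tendsto hf').congr' ?_
  filter_upwards [self_mem_nhdsWithin, slope_tendsto.eventually_ne hf'] with x hx hslope
  have hxr : x - r ≠ 0 := sub_ne_zero.2 hx
  rw [steffensenMap_sub_root hroot hslope, Pi.div_apply]
  field_simp
  ring

/-- Differentiability of `dslope f r` at `r` encodes the expansion
`f x = f r + f'(r) (x - r) + b (x - r)² + o((x - r)²)`, so `b` plays the role of `f''(r) / 2`. -/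
theorem modified_steffensen_exact_order_two_general {b c : 𝕜} (hroot : f r = 0)
    (hf' : deriv f r ≠ 0) (hf : HasDerivAt (dslope f r) b r) (hb : b ≠ 0)
    (hg0 : g 0 = 0) (hg : HasDerivAt g c 0) (hc : c ≠ 0) (hcoef : 1 + c * deriv f r ≠ 0) :
    ∃ δ > 0, ∀ x₀ : 𝕜, x₀ ≠ r → ‖x₀ - r‖ < δ →
      ∀ seq : ℕ → 𝕜, seq 0 = x₀ → (∀ n, seq (n + 1) = steffensenMap f g (seq n)) →
        (∀ n, seq n ≠ r) ∧
        Tendsto (fun n => ‖seq (n + 1) - r‖ / ‖seq n - r‖ ^ 2) atTop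
          (𝓝 (‖b * (1 + c * deriv f r)‖ / ‖deriv f r‖)) := by
  have error_tendsto : Tendsto (fun x => dist (steffensenMap f g x) r / dist x r ^ 2) (𝓝[≠] r)
      (𝓝 (‖b * (1 + c * deriv f r)‖ / ‖deriv f r‖)) := by
    simpa only [dist_eq_norm, norm_div, norm_pow] using
      (tendsto_steffensenMap_sub_root_div_sq hroot hf' hf hg0 hg hc).norm
  have constant_pos : 0 < ‖b * (1 + c * deriv f r)‖ / ‖deriv f r‖ :=
    div_pos (norm_pos_iff.2 (mul_ne_zero hb hcoef)) (norm_pos_iff.2 hf')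
  obtain ⟨δ, hδ, hball⟩ := Metric.nhdsWithin_basis_ball.eventually_iff.1
    (eventually_iterate_ne_and_tendsto_dist_div_pow one_lt_two constant_pos error_tendsto)
  refine ⟨δ, hδ, fun x₀ hx₀ hx₀δ seq hseq0 hseq => ?_⟩
  have seq_eq_iterate : ∀ n, seq n = (steffensenMap f g)^[n] x₀ := by
    intro n
    induction n with
    | zero => exact hseq0
    | succ n ih => rw [hseq, ih, Function.iterate_succ_apply']
  simpa only [seq_eq_iterate, dist_eq_norm] using hball ⟨mem_ball_iff_norm.2 hx₀δ, hx₀⟩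

end Steffensen

/-- Exact second-order convergence of the modified Steffensen iteration
`x_{n+1} = v(x_n)`, `v(x) = x - f x / h x`,
`h(x) = (f (x + g (f x)) - f x) / g (f x)`: when `f''(x*) ≠ 0` and
`1 + g'(0) f'(x*) ≠ 0`, for every `x₀ ≠ x*` close enough to `x*` the iterates
never hit `x*` and `|x_{n+1} - x*| / |x_n - x*|²` converges to the positive
constant `|f''(x*) (1 + g'(0) f'(x*))| / |2 f'(x*)|`. -/
theorem modified_steffensen_exact_order_two
    (f : ℝ → ℝ) (hf : ContDiff ℝ 2 f) (xs : ℝ)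
    (hroot : f xs = 0) (hf' : deriv f xs ≠ 0)
    (hf'' : deriv (deriv f) xs ≠ 0)
    (g : ℝ → ℝ) (hg : ContDiff ℝ 1 g) (hg0 : g 0 = 0) (hg' : deriv g 0 ≠ 0)
    (hcoef : 1 + deriv g 0 * deriv f xs ≠ 0) :
    ∃ δ > 0, ∀ x₀ : ℝ, x₀ ≠ xs → |x₀ - xs| < δ →
      ∀ seq : ℕ → ℝ, seq 0 = x₀ →
        (∀ n : ℕ, seq (n + 1) = seq n - f (seq n) /
          ((f (seq n + g (f (seq n))) - f (seq n)) / g (f (seq n)))) →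
        (∀ n : ℕ, seq n ≠ xs) ∧
        Tendsto (fun n : ℕ => |seq (n + 1) - xs| / |seq n - xs| ^ 2) atTop
          (𝓝 (|deriv (deriv f) xs * (1 + deriv g 0 * deriv f xs)| /
            |2 * deriv f xs|)) := by
  have hdslope : HasDerivAt (dslope f xs) ((1 / 2 : ℝ) • deriv (deriv f) xs) xs :=
    hasDerivAt_dslope_of_hasDerivAt_deriv (.of_forall (hf.differentiable two_ne_zero))
      (hf.differentiable_deriv_two xs).hasDerivAt
  have constant_eq : |deriv (deriv f) xs * (1 + deriv g 0 * deriv f xs)| / |2 * deriv f xs| =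
      ‖(1 / 2 : ℝ) • deriv (deriv f) xs * (1 + deriv g 0 * deriv f xs)‖ / ‖deriv f xs‖ := by
    rw [← abs_div, ← norm_div, Real.norm_eq_abs, smul_eq_mul]
    congr 1
    ring
  rw [constant_eq]
  exact modified_steffensen_exact_order_two_general hroot hf' hdslope
    (smul_ne_zero one_half_pos.ne' hf'') hg0 (hg.differentiable one_ne_zero 0).hasDerivAt hg' hcoef
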